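/- Let n players have strategy sets X_i, each a nonempty compact convex subset of a Euclidean space, constraint correspondences φ_i : X_{−i} → 2^{X_i} that are both upper and lower semicontinuous with nonempty closed convex values, and continuous payoffs V_i : ∏_i X_i → ℝ such that for every fixed x_{−i}, the map x_i ↦ V_i(x_i, x_{−i}) is quasi-concave on φ_i(x_{−i}). Then there exists a Generalized Nash equilibrium: a profile x* with x*_i ∈ φ_i(x*_{−i}) and V_i(x*_i; x*_{−i}) ≥ V_i(x_i; x*_{−i}) for all x_i ∈ φ_i(x*_{−i}) and all i. -/

import Mathlib

/-- Replace the `i`-th coordinate: build a full strategy profile from player `i`'s strategy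
`xi` and the others' profile `xo`. -/
def combineProfile {n : ℕ} {E : Fin n → Type*} (i : Fin n)
    (xi : E i) (xo : ∀ j : {j : Fin n // j ≠ i}, E j.1) : ∀ j, E j :=
  fun j => if h : j = i then cast (congrArg E h.symm) xi else xo ⟨j, h⟩

/-- The profile of all players other than `i`. -/
def othersProfile {n : ℕ} {E : Fin n → Type*} (i : Fin n)
    (x : ∀ j, E j) : ∀ j : {j : Fin n // j ≠ i}, E j.1 :=
  fun j => x j.1

/-!
Scarf's parity argument on dominant sets of a finite set carrying several linear orders yields a
Knaster–Kuratowski–Mazurkiewicz type covering theorem for the simplex, and with it Browder's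
theorem on correspondences that locally admit a constant selection. Separation by continuous linear
functionals upgrades this to the Kakutani–Fan–Glicksberg fixed point theorem. By Berge's maximum
theorem the best replies of each player have closed graph, and a fixed point of the product of the
best reply correspondences is an equilibrium.
-/

section Scarf

open Finset
open scoped Classical

theorem card_filter_image_erase_eq_two {β γ : Type*} {f : β → γ} {s : Finset β}
    (h : #(s.image f) + 1 = #s) : #{x ∈ s | (s.erase x).image f = s.image f} = 2 := by
  obtain ⟨p, hp, q, hq, hpq, hf⟩ := exists_ne_map_eq_of_card_lt_of_maps_to
    (show #(s.image f) < #s by omega) (fun x hx => mem_coe.2 (mem_image_of_mem f hx))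
  have redundant {a b : β} (hb : b ∈ s) (hab : a ≠ b) (hfab : f a = f b) :
      (s.erase a).image f = s.image f := by
    refine (image_subset_image (erase_subset _ _)).antisymm (image_subset_iff.2 fun x hx => ?_)
    rcases eq_or_ne x a with rfl | hxa
    · exact hfab ▸ mem_image_of_mem f (mem_erase.2 ⟨hab.symm, hb⟩)
    · exact mem_image_of_mem f (mem_erase.2 ⟨hxa, hx⟩)
  refine card_eq_two.2 ⟨p, q, hpq, ?_⟩
  ext x
  simp only [mem_filter, mem_insert, mem_singleton]
  constructor
  · rintro ⟨hx, himage⟩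
    have hinj : Set.InjOn f (s.erase x) :=
      injOn_of_card_image_eq (by rw [himage, card_erase_of_mem hx]; omega)
    by_contra! hne
    exact hpq (hinj (mem_erase.2 ⟨hne.1.symm, hp⟩) (mem_erase.2 ⟨hne.2.symm, hq⟩) hf)
  · rintro (rfl | rfl)
    · exact ⟨hp, redundant hq hpq hf⟩
    · exact ⟨hq, redundant hp hpq.symm hf.symm⟩

variable {ι T α : Type*} [LinearOrder α] {r : ι → T → α} {σ τ : Finset T}

/-- A finite set is dominant for a family of rankings if every point lies weakly below the
whole set in one of the rankings. Dominant sets play the role of the simplices of a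
triangulation. -/
def IsDominant (r : ι → T → α) (σ : Finset T) : Prop :=
  ∀ y, ∃ i, ∀ x ∈ σ, r i y ≤ r i x

theorem IsDominant.mono (h : IsDominant r σ) (hτ : τ ⊆ σ) : IsDominant r τ :=
  fun y => (h y).imp fun _ hi x hx => hi x (hτ hx)

/-- `y` is the point that can enter a dominant set with minima `m` when the ranking `a` is freed:
it is the `r a`-largest among the points exceeding the minima of all other rankings. -/
def IsPivot (r : ι → T → α) (m : ι → T) (a : ι) (y : T) : Prop :=
  (∀ k ≠ a, r k (m k) < r k y) ∧ ∀ z, (∀ k ≠ a, r k (m k) < r k z) → r a z ≤ r a y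

variable {m : ι → T} {a b : ι} {y z : T}

theorem IsDominant.le_of_forall_ne_lt (hτ : IsDominant r τ) (hmτ : ∀ i, m i ∈ τ)
    (hz : ∀ k ≠ a, r k (m k) < r k z) : r a z ≤ r a (m a) := by
  obtain ⟨k, hk⟩ := hτ z
  rcases eq_or_ne k a with rfl | hka
  · exact hk _ (hmτ k)
  · exact absurd (hk _ (hmτ k)) (hz k hka).not_ge

theorem IsDominant.image_argmin_eq [Fintype ι] (hr : ∀ i, Function.Injective (r i))
    (hτ : IsDominant r τ) (hmτ : ∀ i, m i ∈ τ) (hmin : ∀ i, ∀ x ∈ τ, r i (m i) ≤ r i x) :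
    univ.image m = τ := by
  refine (image_subset_iff.2 fun i _ => hmτ i).antisymm fun x hx => ?_
  obtain ⟨i, hi⟩ := hτ x
  exact mem_image.2 ⟨i, mem_univ i, hr i ((hmin i x hx).antisymm (hi _ (hmτ i)))⟩

theorem IsPivot.exists_of_lt [Finite T] (hz : ∀ k ≠ a, r k (m k) < r k z) :
    ∃ y, IsPivot r m a y :=
  Set.exists_max_image {y | ∀ k ≠ a, r k (m k) < r k y} (r a) (Set.toFinite _) ⟨z, hz⟩

theorem IsPivot.isDominant_insert (hy : IsPivot r m a y) (hτ : IsDominant r τ)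
    (hmτ : ∀ i, m i ∈ τ) (hmin : ∀ i, ∀ x ∈ τ, r i (m i) ≤ r i x) :
    IsDominant r (insert y τ) := by
  intro z
  by_cases hz : ∀ k ≠ a, r k (m k) < r k z
  · exact ⟨a, forall_mem_insert .. |>.2
      ⟨hy.2 z hz, fun x hx => (hτ.le_of_forall_ne_lt hmτ hz).trans (hmin a x hx)⟩⟩
  · push Not at hz
    obtain ⟨k, hka, hk⟩ := hz
    exact ⟨k, forall_mem_insert .. |>.2
      ⟨hk.trans (hy.1 k hka).le, fun x hx => hk.trans (hmin k x hx)⟩⟩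

theorem IsPivot.notMem [Fintype ι] (hy : IsPivot r m a y) (hm : (univ.erase a).image m = τ) :
    y ∉ τ := by
  rintro hyτ
  obtain ⟨k, hk, rfl⟩ := mem_image.1 (hm ▸ hyτ)
  exact (hy.1 k (ne_of_mem_erase hk)).false

theorem IsPivot.ne (hy : IsPivot r m a y) (hz : IsPivot r m b z) (hab : a ≠ b)
    (hτ : IsDominant r τ) (hmτ : ∀ i, m i ∈ τ) : y ≠ z := by
  rintro rfl
  exact (hτ.le_of_forall_ne_lt hmτ hy.1).not_gt (hz.1 a hab)

theorem exists_lt_of_isDominant_insert (hr : ∀ i, Function.Injective (r i)) (hmτ : ∀ i, m i ∈ τ)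
    (hmin : ∀ i, ∀ x ∈ τ, r i (m i) ≤ r i x) (hzτ : z ∉ τ) (hz : IsDominant r (insert z τ))
    {x : T} (hx : x ∈ τ) : ∃ k, m k = x ∧ r k (m k) < r k z := by
  obtain ⟨k, hk⟩ := hz x
  rw [forall_mem_insert] at hk
  obtain rfl : m k = x := hr k ((hmin k x hx).antisymm (hk.2 _ (hmτ k)))
  exact ⟨k, rfl, hk.1.lt_of_ne fun h => hzτ (hr k h ▸ hx)⟩

theorem exists_isPivot_of_isDominant_insert [Fintype ι] (hr : ∀ i, Function.Injective (r i))
    (hcard : #τ + 1 = Fintype.card ι) (hmτ : ∀ i, m i ∈ τ)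
    (hmin : ∀ i, ∀ x ∈ τ, r i (m i) ≤ r i x) (hzτ : z ∉ τ) (hz : IsDominant r (insert z τ)) :
    ∃ a, (univ.erase a).image m = τ ∧ IsPivot r m a z := by
  obtain ⟨a, ha⟩ := hz z
  have below {x : T} (hx : x ∈ τ) : ∃ k ≠ a, m k = x ∧ r k (m k) < r k z := by
    obtain ⟨k, rfl, hk⟩ := exists_lt_of_isDominant_insert hr hmτ hmin hzτ hz hx
    refine ⟨k, ?_, rfl, hk⟩
    rintro rfl
    exact hk.not_ge (ha _ (mem_insert_of_mem hx))
  have himage : (univ.erase a).image m = τ := by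
    refine (image_subset_iff.2 fun i _ => hmτ i).antisymm fun x hx => ?_
    obtain ⟨k, hka, hkx, -⟩ := below hx
    exact mem_image.2 ⟨k, mem_erase.2 ⟨hka, mem_univ k⟩, hkx⟩
  have hinj : Set.InjOn m (univ.erase a : Finset ι) :=
    injOn_of_card_image_eq (by rw [himage, card_erase_of_mem (mem_univ a), card_univ]; omega)
  refine ⟨a, himage, fun k hka => ?_, fun w hw => ?_⟩
  · obtain ⟨l, hla, hlk, hl⟩ := below (hmτ k)
    obtain rfl : l = k := hinj (by simpa using hla) (by simpa using hka) hlk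
    exact hl
  · obtain ⟨k, hk⟩ := hz w
    rw [forall_mem_insert] at hk
    rcases eq_or_ne k a with rfl | hka
    · exact hk.1
    · exact absurd (hk.2 _ (hmτ k)) (hw k hka).not_ge

theorem IsPivot.unique (hr : Function.Injective (r a)) (hy : IsPivot r m a y)
    (hz : IsPivot r m a z) : y = z :=
  hr ((hz.2 y hy.1).antisymm (hy.2 z hz.1))

theorem IsDominant.card_covBy_eq_two [Fintype ι] [Fintype T]
    (hr : ∀ i, Function.Injective (r i)) (hτ : IsDominant r τ) (hcard : #τ + 1 = Fintype.card ι)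
    {e : ι → T} {x₀ : T} (hx₀ : x₀ ∈ τ) (he : ∀ a, ∀ k ≠ a, r k x₀ < r k (e a)) :
    #{σ | τ ⋖ σ ∧ IsDominant r σ} = 2 := by
  choose m hmτ hmin using fun i => exists_min_image τ (r i) ⟨x₀, hx₀⟩
  have himage := hτ.image_argmin_eq hr hmτ hmin
  choose y hy using fun a => IsPivot.exists_of_lt (z := e a)
    fun k hk => (hmin k x₀ hx₀).trans_lt (he a k hk)
  rw [← card_filter_image_erase_eq_two (f := m) (s := univ) (by rw [himage, hcard, card_univ])]
  refine (card_bij (fun a _ => insert (y a) τ) ?_ ?_ ?_).symm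
  · simp only [himage, mem_filter, mem_univ, true_and]
    exact fun a ha => ⟨covBy_insert ((hy a).notMem ha), (hy a).isDominant_insert hτ hmτ hmin⟩
  · simp only [himage, mem_filter, mem_univ, true_and]
    intro a ha b _ hab
    by_contra hne
    exact (hy a).ne (hy b) hne hτ hmτ ((insert_inj ((hy a).notMem ha)).1 hab)
  · simp only [himage, mem_filter, mem_univ, true_and, covBy_iff_exists_insert]
    rintro _ ⟨⟨z, hzτ, rfl⟩, hz⟩
    obtain ⟨a, ha, hza⟩ := exists_isPivot_of_isDominant_insert hr hcard hmτ hmin hzτ hz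
    exact ⟨a, ha, by rw [(hy a).unique (hr a) hza]⟩

theorem card_filter_covBy_image_eq_two [Fintype T] {β : Type*} {c : T → β}
    (h : #(σ.image c) + 1 = #σ) : #{τ | τ ⋖ σ ∧ τ.image c = σ.image c} = 2 := by
  rw [← card_filter_image_erase_eq_two h,
    ← card_image_of_injOn ((erase_injOn σ).mono (filter_subset _ σ))]
  congr 1
  ext τ
  simp only [mem_filter, mem_univ, true_and, mem_image, covBy_iff_exists_erase]
  constructor
  · rintro ⟨⟨x, hx, rfl⟩, himage⟩
    exact ⟨x, ⟨hx, himage⟩, rfl⟩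
  · rintro ⟨x, ⟨hx, himage⟩, rfl⟩
    exact ⟨⟨x, hx, rfl⟩, himage⟩

section Parity

variable [Fintype ι] {e : ι → T} {i₀ : ι}

theorem isDominant_image_erase (hbot : ∀ i x, r i (e i) ≤ r i x)
    (htop : ∀ i, ∀ k ≠ i, ∀ x ∉ Set.range e, r k x < r k (e i)) :
    IsDominant r ((univ.erase i₀).image e) := by
  intro y
  by_cases hy : y ∈ Set.range e
  · obtain ⟨k, rfl⟩ := hy
    exact ⟨k, fun x _ => hbot k x⟩
  · refine ⟨i₀, forall_mem_image.2 fun k hk => ?_⟩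
    exact (htop k i₀ (ne_of_mem_erase hk).symm y hy).le

theorem isDominant_insert_image_erase_iff (hr : ∀ i, Function.Injective (r i))
    (hbot : ∀ i x, r i (e i) ≤ r i x)
    (htop : ∀ i, ∀ k ≠ i, ∀ x ∉ Set.range e, r k x < r k (e i)) :
    IsDominant r (insert z ((univ.erase i₀).image e)) ↔
      ∀ y ∉ Set.range e, r i₀ y ≤ r i₀ z := by
  constructor
  · intro hz y hy
    obtain ⟨k, hk⟩ := hz y
    rw [forall_mem_insert, forall_mem_image] at hk
    rcases eq_or_ne k i₀ with rfl | hk₀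
    · exact hk.1
    · have : r k y ≤ r k (e k) := hk.2 (mem_erase.2 ⟨hk₀, mem_univ k⟩)
      exact absurd ⟨k, hr k ((hbot k y).antisymm this)⟩ hy
  · intro hz y
    by_cases hy : y ∈ Set.range e
    · obtain ⟨k, rfl⟩ := hy
      exact ⟨k, fun x _ => hbot k x⟩
    · refine ⟨i₀, forall_mem_insert .. |>.2 ⟨hz y hy, forall_mem_image.2 fun k hk => ?_⟩⟩
      exact (htop k i₀ (ne_of_mem_erase hk).symm y hy).le

theorem card_covBy_image_erase_eq_one [Fintype T] (hr : ∀ i, Function.Injective (r i))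
    (hbot : ∀ i x, r i (e i) ≤ r i x)
    (htop : ∀ i, ∀ k ≠ i, ∀ x ∉ Set.range e, r k x < r k (e i)) (he : ∃ s, s ∉ Set.range e) :
    #{σ | (univ.erase i₀).image e ⋖ σ ∧ IsDominant r σ} = 1 := by
  have hiff {z : T} := isDominant_insert_image_erase_iff (z := z) (i₀ := i₀) hr hbot htop
  obtain ⟨y, hy, hmax⟩ := Set.exists_max_image {x | x ∉ Set.range e} (r i₀) (Set.toFinite _) he
  have hyτ : y ∉ (univ.erase i₀).image e := fun h => hy (by
    obtain ⟨k, -, hk⟩ := mem_image.1 h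
    exact ⟨k, hk⟩)
  refine card_eq_one.2 ⟨insert y ((univ.erase i₀).image e), ?_⟩
  ext σ
  simp only [mem_filter, mem_univ, true_and, mem_singleton]
  constructor
  · rw [covBy_iff_exists_insert]
    rintro ⟨⟨z, hzτ, rfl⟩, hdom⟩
    have hz : z ∉ Set.range e := by
      rintro ⟨k, rfl⟩
      rcases eq_or_ne k i₀ with rfl | hk
      · exact hy ⟨k, hr k ((hbot k y).antisymm (hiff.1 hdom y hy))⟩
      · exact hzτ (mem_image_of_mem e (mem_erase.2 ⟨hk, mem_univ k⟩))
    rw [hr i₀ ((hmax z hz).antisymm (hiff.1 hdom y hy))]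
  · rintro rfl
    exact ⟨covBy_insert hyτ, hiff.2 hmax⟩

theorem IsDominant.card_covBy_eq_two_of_ne [Fintype T] (hr : ∀ i, Function.Injective (r i))
    (htop : ∀ i, ∀ k ≠ i, ∀ x ∉ Set.range e, r k x < r k (e i)) {c : T → ι}
    (hc : ∀ i, c (e i) = i) (hτ : IsDominant r τ) (hcard : #τ + 1 = Fintype.card ι)
    (himage : τ.image c = univ.erase i₀) (hne : τ ≠ (univ.erase i₀).image e) :
    #{σ | τ ⋖ σ ∧ IsDominant r σ} = 2 := by
  obtain ⟨x₀, hx₀τ, hx₀⟩ : ∃ x₀ ∈ τ, x₀ ∉ Set.range e := by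
    contrapose! hne
    have hec : ∀ x ∈ τ, (e ∘ c) x = id x := fun x hx => by
      obtain ⟨k, rfl⟩ := hne x hx
      exact congrArg e (hc k)
    rw [← himage, image_image, image_congr hec, image_id]
  exact hτ.card_covBy_eq_two hr hcard hx₀τ fun a k hk => htop a k hk x₀ hx₀

/-- The dominant sets of `n` points which carry exactly the colours other than `i₀`. With `N`
colours in all, `n = N - 1` gives the doors and `n = N` the rooms of the parity argument. -/
noncomputable def dominantMissing [Fintype T] (r : ι → T → α) (c : T → ι) (i₀ : ι) (n : ℕ) :
    Finset (Finset T) :=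
  {σ | IsDominant r σ ∧ #σ = n ∧ σ.image c = univ.erase i₀}

theorem mem_dominantMissing [Fintype T] {c : T → ι} {n : ℕ} : σ ∈ dominantMissing r c i₀ n ↔
    IsDominant r σ ∧ #σ = n ∧ σ.image c = univ.erase i₀ :=
  mem_filter_univ σ

theorem card_bipartiteBelow_dominantMissing [Fintype T] {c : T → ι} {n : ℕ}
    (hn : #(univ.erase i₀) = n) (hσ : σ ∈ dominantMissing r c i₀ (n + 1)) :
    #(bipartiteBelow (· ⋖ ·) (dominantMissing r c i₀ n) σ) = 2 := by
  obtain ⟨hdom, hcard, himage⟩ := mem_dominantMissing.1 hσ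
  rw [← card_filter_covBy_image_eq_two (σ := σ) (c := c) (by rw [himage, hcard, hn])]
  congr 1
  ext τ
  simp only [mem_bipartiteBelow, mem_dominantMissing, mem_filter_univ, himage]
  refine ⟨fun ⟨⟨_, _, hτ⟩, hτσ⟩ => ⟨hτσ, hτ⟩, fun ⟨hτσ, hτ⟩ => ⟨⟨hdom.mono hτσ.le, ?_, hτ⟩, hτσ⟩⟩
  exact Nat.succ_injective ((Nat.covBy_iff_add_one_eq.1 hτσ.card_finset).trans hcard)

theorem bipartiteAbove_dominantMissing [Fintype T] {c : T → ι} {n : ℕ}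
    (hno : ∀ σ, IsDominant r σ → σ.image c ≠ univ) (hτ : τ ∈ dominantMissing r c i₀ n) :
    bipartiteAbove (· ⋖ ·) (dominantMissing r c i₀ (n + 1)) τ =
      ({σ | τ ⋖ σ ∧ IsDominant r σ} : Finset (Finset T)) := by
  obtain ⟨-, hcard, himage⟩ := mem_dominantMissing.1 hτ
  ext σ
  simp only [mem_bipartiteAbove, mem_dominantMissing, mem_filter_univ]
  refine ⟨fun ⟨⟨hσ, _⟩, hτσ⟩ => ⟨hτσ, hσ⟩, fun ⟨hτσ, hσ⟩ => ⟨⟨hσ, ?_, ?_⟩, hτσ⟩⟩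
  · rw [← hcard, Nat.covBy_iff_add_one_eq.1 hτσ.card_finset]
  · exact ((erase_covBy (mem_univ i₀)).eq_or_eq (himage ▸ image_subset_image hτσ.le)
      (subset_univ _)).resolve_right (hno σ hσ)

theorem exists_isDominant_image_eq_univ [Finite T] [Nonempty ι]
    (hr : ∀ i, Function.Injective (r i)) (hbot : ∀ i x, r i (e i) ≤ r i x)
    (htop : ∀ i, ∀ k ≠ i, ∀ x ∉ Set.range e, r k x < r k (e i)) (he : ∃ s, s ∉ Set.range e)
    {c : T → ι} (hc : ∀ i, c (e i) = i) :
    ∃ σ, IsDominant r σ ∧ σ.image c = univ := by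
  by_contra! hno
  have := Fintype.ofFinite T
  obtain ⟨i₀⟩ := ‹Nonempty ι›
  obtain ⟨n, hn⟩ : ∃ n, #(univ.erase i₀) = n := ⟨_, rfl⟩
  have hcard : n + 1 = Fintype.card ι := hn ▸ card_erase_add_one (mem_univ i₀)
  have hτ₀ : (univ.erase i₀).image e ∈ dominantMissing r c i₀ n := by
    refine mem_dominantMissing.2 ⟨isDominant_image_erase hbot htop, ?_, ?_⟩
    · rw [card_image_of_injective _ (Function.LeftInverse.injective hc), hn]
    · rw [image_image, show c ∘ e = id from funext hc, image_id]
  have even_incidences : 2 ∣ ∑ τ ∈ dominantMissing r c i₀ n,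
      #(bipartiteAbove (· ⋖ ·) (dominantMissing r c i₀ (n + 1)) τ) := by
    rw [sum_card_bipartiteAbove_eq_sum_card_bipartiteBelow]
    exact dvd_sum fun σ hσ => (card_bipartiteBelow_dominantMissing hn hσ).symm.dvd
  have even_other_doors : 2 ∣ ∑ τ ∈ (dominantMissing r c i₀ n).erase ((univ.erase i₀).image e),
      #(bipartiteAbove (· ⋖ ·) (dominantMissing r c i₀ (n + 1)) τ) := by
    refine dvd_sum fun τ hτ => ?_
    obtain ⟨hne, hdoor⟩ := mem_erase.1 hτ
    obtain ⟨hdom, hτcard, himage⟩ := mem_dominantMissing.1 hdoor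
    rw [bipartiteAbove_dominantMissing hno hdoor,
      hdom.card_covBy_eq_two_of_ne hr htop hc (by rw [hτcard, hcard]) himage hne]
  rw [← sum_erase_add _ _ hτ₀, bipartiteAbove_dominantMissing hno hτ₀,
    card_covBy_image_erase_eq_one hr hbot htop he] at even_incidences
  omega

theorem exists_isDominant_image_eq_univ_of_forall_lt [Finite T] [Nonempty ι]
    (hbot : ∀ i, ∀ x ≠ e i, r i (e i) < r i x)
    (htop : ∀ i, ∀ k ≠ i, ∀ x ∉ Set.range e, r k x < r k (e i)) (he : ∃ s, s ∉ Set.range e)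
    {c : T → ι} (hc : ∀ i, c (e i) = i) :
    ∃ σ, IsDominant r σ ∧ σ.image c = univ := by
  have := Fintype.ofFinite T
  let r' (i : ι) (x : T) : α ×ₗ Fin (Fintype.card T) := toLex (r i x, Fintype.equivFin T x)
  have le_of_le {i : ι} {x y : T} (h : r' i x ≤ r' i y) : r i x ≤ r i y :=
    Prod.Lex.monotone_fst _ _ h
  have lt_of_lt {i : ι} {x y : T} (h : r i x < r i y) : r' i x < r' i y :=
    Prod.Lex.toLex_lt_toLex.2 (Or.inl h)
  have hr' (i : ι) : Function.Injective (r' i) := fun x y h =>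
    (Fintype.equivFin T).injective (congrArg (fun p => (ofLex p).2) h)
  have hbot' (i : ι) (x : T) : r' i (e i) ≤ r' i x := by
    rcases eq_or_ne x (e i) with rfl | hx
    · exact le_rfl
    · exact (lt_of_lt (hbot i x hx)).le
  obtain ⟨σ, hσ, himage⟩ := exists_isDominant_image_eq_univ hr' hbot'
    (fun i k hk x hx => lt_of_lt (htop i k hk x hx)) he hc
  exact ⟨σ, fun y => (hσ y).imp fun i hi x hx => le_of_le (hi x hx), himage⟩

end Parity

-- Scarf's lemma is applied after adjoining one slack point per ranking, ranked last by its own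
-- ranking and first by all others; `J` collects the rankings whose slack point is not used.
theorem exists_forall_exists_le_and_subset_image [Finite ι] [Nonempty ι] [Finite T] [Nonempty T]
    (w : ι → T → α) (c : T → ι) : ∃ (J : Finset ι) (σ : Finset T),
      (∀ y, ∃ i ∈ J, ∀ x ∈ σ, w i y ≤ w i x) ∧ J ⊆ σ.image c := by
  have := Fintype.ofFinite ι
  let r (i : ι) : T ⊕ ι → WithBot (WithTop α) :=
    Sum.elim (fun t => ((w i t : WithTop α) : WithBot (WithTop α)))
      fun k => if k = i then ⊥ else ⊤
  have hbot (i : ι) : ∀ x ≠ Sum.inr i, r i (Sum.inr i) < r i x := by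
    rintro (t | k) hk
    · simp [r]
    · simp [r, show k ≠ i by simpa using hk]
  have htop (i : ι) : ∀ k ≠ i, ∀ x ∉ Set.range Sum.inr, r k x < r k (Sum.inr i) := by
    rintro k hki (t | l) hx
    · simpa [r, hki.symm] using WithBot.coe_lt_coe.2 (WithTop.coe_lt_top (w k t))
    · simp at hx
  obtain ⟨σ, hσ, himage⟩ := exists_isDominant_image_eq_univ_of_forall_lt (c := Sum.elim c id)
    hbot htop ⟨Sum.inl (Classical.arbitrary T), by simp⟩ fun _ => rfl
  refine ⟨univ.filter fun i => Sum.inr i ∉ σ, σ.toLeft, fun y => ?_, fun i hi => ?_⟩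
  · obtain ⟨i, hi⟩ := hσ (Sum.inl y)
    refine ⟨i, (mem_filter_univ i).2 fun hiσ => ?_, fun x hx => ?_⟩
    · simpa [r] using hi _ hiσ
    · simpa [r] using hi _ (mem_toLeft.1 hx)
  · obtain ⟨t | k, hx, rfl⟩ := mem_image.1 (himage ▸ mem_univ i)
    · exact mem_image_of_mem c (mem_toLeft.2 hx)
    · exact absurd hx ((mem_filter_univ k).1 hi)

end Scarf

section Covering

open Set Metric

variable {ι : Type*} [Fintype ι]

theorem one_sub_sum_le_card_mul {b : ι → ℝ} {J : Finset ι} {η : ℝ} (hb : ∀ i, 0 ≤ b i)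
    (hsum : ∑ i, b i ≤ 1) (hJ : J.Nonempty)
    (h : ∀ z ∈ stdSimplex ℝ ι, ∃ i ∈ J, z i ≤ b i + η) : 1 - ∑ i, b i ≤ J.card * η := by
  classical
  have hcard : (0 : ℝ) < J.card := Nat.cast_pos.2 hJ.card_pos
  set s := 1 - ∑ i, b i with hs
  have hs₀ : 0 ≤ s / J.card := div_nonneg (sub_nonneg.2 hsum) hcard.le
  obtain ⟨i, hi, hle⟩ := h (fun i => b i + if i ∈ J then s / J.card else 0)
    ⟨fun i => add_nonneg (hb i) (by split_ifs <;> simp [hs₀]), by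
      rw [Finset.sum_add_distrib, Finset.sum_ite_mem, Finset.univ_inter, Finset.sum_const,
        nsmul_eq_mul, mul_div_cancel₀ _ hcard.ne', hs, add_sub_cancel]⟩
  rw [if_pos hi, add_le_add_iff_left, div_le_iff₀' hcard] at hle
  exact hle

theorem le_add_one_sub_sum {b x : ι → ℝ} (hx : x ∈ stdSimplex ℝ ι) (hbx : ∀ i, b i ≤ x i)
    (i : ι) : x i ≤ b i + (1 - ∑ i, b i) := by
  have : x i - b i ≤ ∑ j, (x j - b j) :=
    Finset.single_le_sum (fun j _ => sub_nonneg.2 (hbx j)) (Finset.mem_univ i)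
  rw [Finset.sum_sub_distrib, hx.2] at this
  linarith

theorem exists_forall_mem_Icc_of_forall_exists_le {T : Type*} {p : T → ι → ℝ} {σ : Finset T}
    {J : Finset ι} {η : ℝ} (hp : ∀ t ∈ σ, p t ∈ stdSimplex ℝ ι) (hσ : σ.Nonempty)
    (hJ : J.Nonempty) (h : ∀ z ∈ stdSimplex ℝ ι, ∃ i ∈ J, ∀ t ∈ σ, z i ≤ p t i + η) :
    ∃ b : ι → ℝ, (∀ i ∉ J, b i = 0) ∧ ∀ t ∈ σ, ∀ i, p t i ∈ Icc (b i) (b i + J.card * η) := by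
  classical
  let b (i : ι) : ℝ := if i ∈ J then σ.inf' hσ (fun t => p t i) else 0
  have hb (i : ι) : 0 ≤ b i := by
    unfold b
    split_ifs
    · exact (Finset.le_inf'_iff _ _).2 fun t ht => (hp t ht).1 i
    · exact le_rfl
  have hbσ {t : T} (ht : t ∈ σ) (i : ι) : b i ≤ p t i := by
    unfold b
    split_ifs
    · exact Finset.inf'_le _ ht
    · exact (hp t ht).1 i
  have hsum : ∑ i, b i ≤ 1 := by
    obtain ⟨t, ht⟩ := hσ
    exact (hp t ht).2 ▸ Finset.sum_le_sum fun i _ => hbσ ht i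
  have hgap : 1 - ∑ i, b i ≤ J.card * η := by
    refine one_sub_sum_le_card_mul hb hsum hJ fun z hz => ?_
    obtain ⟨i, hi, hle⟩ := h z hz
    refine ⟨i, hi, ?_⟩
    simp only [b, if_pos hi]
    exact sub_le_iff_le_add.1
      ((Finset.le_inf'_iff _ _).2 fun t ht => sub_le_iff_le_add.2 (hle t ht))
  refine ⟨b, fun i hi => if_neg hi, fun t ht i => ⟨hbσ ht i, ?_⟩⟩
  exact (le_add_one_sub_sum (hp t ht) (hbσ ht) i).trans (by gcongr)

theorem exists_le_or_mem_cthickening_of_stdSimplex_subset [Nonempty ι] {S : ι → Set (ι → ℝ)}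
    (hS : stdSimplex ℝ ι ⊆ ⋃ i, S i) {ε : ℝ} (hε : 0 < ε) :
    ∃ x ∈ stdSimplex ℝ ι, ∀ i, x i ≤ ε ∨ x ∈ cthickening ε (S i) := by
  classical
  have hcard : (0 : ℝ) < Fintype.card ι := Nat.cast_pos.2 Fintype.card_pos
  obtain ⟨net, hnet, hfin, hcover⟩ :=
    (isCompact_stdSimplex ℝ ι).finite_cover_balls (div_pos hε hcard)
  have exists_near {z : ι → ℝ} (hz : z ∈ stdSimplex ℝ ι) :
      ∃ y : net, ∀ i, z i ≤ y.1 i + ε / Fintype.card ι := by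
    obtain ⟨y, hy, hzy⟩ := mem_iUnion₂.1 (hcover hz)
    exact ⟨⟨y, hy⟩, fun i => sub_le_iff_le_add'.1
      ((le_abs_self _).trans ((dist_le_pi_dist z y i).trans (mem_ball.1 hzy).le))⟩
  have : Finite net := hfin
  have : Nonempty net :=
    (exists_near (single_mem_stdSimplex ℝ (Classical.arbitrary ι))).nonempty
  choose c hc using fun t : net => mem_iUnion.1 (hS (hnet t.2))
  obtain ⟨J, σ, hdom, hJσ⟩ :=
    exists_forall_exists_le_and_subset_image (fun i (t : net) => t.1 i) c
  have hJ : J.Nonempty := (hdom (Classical.arbitrary net)).imp fun _ h => h.1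
  obtain ⟨x, hx⟩ : σ.Nonempty := Finset.image_nonempty.1 (hJ.mono hJσ)
  obtain ⟨b, hbJ, hb⟩ := exists_forall_mem_Icc_of_forall_exists_le (fun t _ => hnet t.2) ⟨x, hx⟩ hJ
    fun z hz => by
      obtain ⟨y, hy⟩ := exists_near hz
      obtain ⟨i, hi, hle⟩ := hdom y
      exact ⟨i, hi, fun t ht => (hy i).trans (by gcongr; exact hle t ht)⟩
  have hJε : J.card * (ε / Fintype.card ι) ≤ ε := by
    rw [← mul_div_assoc, div_le_iff₀ hcard, mul_comm]
    gcongr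
    exact Finset.card_le_univ J
  refine ⟨x, hnet x.2, fun i => ?_⟩
  by_cases hi : i ∈ J
  · obtain ⟨t, ht, rfl⟩ := Finset.mem_image.1 (hJσ hi)
    refine Or.inr (mem_cthickening_of_dist_le _ _ _ _ (hc t) ((dist_pi_le_iff hε.le).2 fun k => ?_))
    exact (Real.dist_le_of_mem_Icc (hb x hx k) (hb t ht k)).trans (by linarith)
  · exact Or.inl ((hb x hx i).2.trans (by rwa [hbJ i hi, zero_add]))

theorem exists_forall_ne_zero_mem_of_isClosed [Nonempty ι] {S : ι → Set (ι → ℝ)}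
    (hS : stdSimplex ℝ ι ⊆ ⋃ i, S i) (hclosed : ∀ i, IsClosed (S i)) :
    ∃ x ∈ stdSimplex ℝ ι, ∀ i, x i ≠ 0 → x ∈ S i := by
  let A (ε : Ioi (0 : ℝ)) : Set (ι → ℝ) :=
    stdSimplex ℝ ι ∩ {x | ∀ i, x i ≤ ε ∨ x ∈ cthickening ε (S i)}
  have hA (ε : Ioi (0 : ℝ)) : IsClosed (A ε) := by
    refine (isClosed_stdSimplex ℝ ι).inter ?_
    simp only [ofPred_forall, ofPred_or]
    exact isClosed_iInter fun i =>
      (isClosed_le (continuous_apply i) continuous_const).union isClosed_cthickening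
  have hmono {ε δ : Ioi (0 : ℝ)} (h : ε ≤ δ) : A ε ⊆ A δ := fun x hx =>
    ⟨hx.1, fun i => (hx.2 i).imp (fun h' => h'.trans h) fun h' => cthickening_mono h _ h'⟩
  obtain ⟨x, hx⟩ := IsCompact.nonempty_iInter_of_directed_nonempty_isCompact_isClosed A
    (fun ε δ => ⟨min ε δ, hmono (min_le_left _ _), hmono (min_le_right _ _)⟩)
    (fun ε => exists_le_or_mem_cthickening_of_stdSimplex_subset hS ε.2)
    (fun ε => (isCompact_stdSimplex ℝ ι).of_isClosed_subset (hA ε) inter_subset_left) hA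
  rw [mem_iInter] at hx
  have hxΔ : x ∈ stdSimplex ℝ ι := (hx ⟨1, mem_Ioi.2 one_pos⟩).1
  refine ⟨x, hxΔ, fun i hi => ?_⟩
  have hpos : 0 < x i := (hxΔ.1 i).lt_of_ne' hi
  rw [← (hclosed i).closure_eq, closure_eq_iInter_cthickening' _ (Ioo 0 (x i))]
  · exact mem_iInter₂.2 fun ε hε => ((hx ⟨ε, hε.1⟩).2 i).resolve_left hε.2.not_ge
  · intro ε hε
    obtain ⟨δ, hδ⟩ := exists_between (lt_min hε hpos)
    exact ⟨δ, ⟨hδ.1, hδ.2.trans_le (min_le_right _ _)⟩, hδ.1, (hδ.2.trans_le (min_le_left _ _)).le⟩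

theorem exists_forall_ne_zero_mem_of_isOpen [Nonempty ι] {U : ι → Set (ι → ℝ)}
    (hU : stdSimplex ℝ ι ⊆ ⋃ i, U i) (hopen : ∀ i, IsOpen (U i)) :
    ∃ x ∈ stdSimplex ℝ ι, ∀ i, x i ≠ 0 → x ∈ U i := by
  obtain ⟨S, hS, hclosed, hSU⟩ := exists_subset_iUnion_closed_subset
    (isClosed_stdSimplex ℝ ι) hopen (fun _ _ => toFinite _) hU
  obtain ⟨x, hx, hxS⟩ := exists_forall_ne_zero_mem_of_isClosed hS hclosed
  exact ⟨x, hx, fun i hi => hSU i (hxS i hi)⟩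

end Covering

section FixedPoint

open Set Filter Topology

variable {E : Type*} [AddCommGroup E] [Module ℝ E] [TopologicalSpace E] [ContinuousSMul ℝ E]
  {K : Set E}

theorem exists_mem_self_of_eventually_mem [ContinuousAdd E] {T : E → Set E} (hK : IsCompact K)
    (hconv : Convex ℝ K) (hne : K.Nonempty) (hT : ∀ x ∈ K, Convex ℝ (T x))
    (hloc : ∀ x ∈ K, ∃ y ∈ K, ∀ᶠ x' in 𝓝[K] x, y ∈ T x') : ∃ x ∈ K, x ∈ T x := by
  simp only [eventually_nhdsWithin_iff, eventually_nhds_iff] at hloc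
  choose! y hyK U hU hopen hmem using hloc
  obtain ⟨t, htK, hcover⟩ := hK.elim_nhds_subcover U fun x hx => (hopen x hx).mem_nhds (hmem x hx)
  have : Nonempty t := by
    obtain ⟨x, hx⟩ := hne
    obtain ⟨j, hj, -⟩ := mem_iUnion₂.1 (hcover hx)
    exact ⟨⟨j, hj⟩⟩
  let p (w : t → ℝ) : E := ∑ j, w j • y j
  have hp : Continuous p := by fun_prop
  have hpK {w : t → ℝ} (hw : w ∈ stdSimplex ℝ t) : p w ∈ K :=
    hconv.sum_mem (fun j _ => hw.1 j) hw.2 fun j _ => hyK j (htK j j.2)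
  obtain ⟨w, hw, hwU⟩ := exists_forall_ne_zero_mem_of_isOpen (U := fun j : t => p ⁻¹' U j)
    (fun w hw => by simpa using hcover (hpK hw)) fun j => (hopen j (htK j j.2)).preimage hp
  refine ⟨p w, hpK hw, ?_⟩
  have := (hT _ (hpK hw)).finsum_mem hw.1 (by rw [finsum_eq_sum_of_fintype, hw.2])
    fun j hj => hU j (htK j j.2) (p w) (hwU j hj) (hpK hw)
  rwa [finsum_eq_sum_of_fintype] at this

variable [IsTopologicalAddGroup E] [LocallyConvexSpace ℝ E] {F : E → Set E}

theorem exists_eventually_forall_lt_of_notMem (hF : UpperHemicontinuousOn F K) {x : E}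
    (hx : x ∈ K) (hconv : Convex ℝ (F x)) (hclosed : IsClosed (F x)) (hxF : x ∉ F x) :
    ∃ l : StrongDual ℝ E, ∀ᶠ x' in 𝓝[K] x, ∀ b ∈ F x', l x' < l b := by
  obtain ⟨l, u, hlx, hl⟩ := geometric_hahn_banach_point_closed hconv hclosed hxF
  refine ⟨l, ?_⟩
  have hbelow : ∀ᶠ x' in 𝓝[K] x, l x' < u :=
    l.continuous.continuousWithinAt.eventually_lt_const hlx
  have habove : ∀ᶠ x' in 𝓝[K] x, F x' ⊆ {b | u < l b} :=
    hF.forall_isOpen x hx _ (isOpen_lt continuous_const l.continuous) hl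
  filter_upwards [hbelow, habove] with x' hx' hF' b hb using hx'.trans (hF' hb)

-- Without a fixed point, finitely many functionals `l j` separate `x` strictly from `F x`, each on
-- a closed piece `C j` of `K`; the halfspaces they cut out enlarge `F` to a correspondence to which
-- the previous theorem applies, and its fixed point satisfies `l j x < l j x`.
theorem exists_mem_self_of_upperHemicontinuousOn (hK : IsCompact K) (hconv : Convex ℝ K)
    (hne : K.Nonempty) (hF : UpperHemicontinuousOn F K) (hFne : ∀ x ∈ K, (F x).Nonempty)
    (hFconv : ∀ x ∈ K, Convex ℝ (F x)) (hFclosed : ∀ x ∈ K, IsClosed (F x))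
    (hFK : ∀ x ∈ K, F x ⊆ K) : ∃ x ∈ K, x ∈ F x := by
  by_contra! hno
  have separated : ∀ x ∈ K, ∃ l : StrongDual ℝ E, ∃ C ∈ 𝓝 x, IsClosed C ∧
      ∀ x' ∈ C, x' ∈ K → ∀ b ∈ F x', l x' < l b := fun x hx => by
    obtain ⟨l, hl⟩ :=
      exists_eventually_forall_lt_of_notMem hF hx (hFconv x hx) (hFclosed x hx) (hno x hx)
    obtain ⟨C, hC, hCclosed, hCl⟩ :=
      exists_mem_nhds_isClosed_subset (eventually_nhdsWithin_iff.1 hl)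
    exact ⟨l, C, hC, hCclosed, hCl⟩
  choose! l C hC hCclosed hl using separated
  obtain ⟨t, htK, hcover⟩ := hK.elim_nhds_subcover C hC
  let T (x : E) : Set E := {y | ∀ j ∈ t, x ∈ C j → l j x < l j y}
  have hTconv (x : E) : Convex ℝ (T x) := by
    simp only [T, ofPred_forall]
    exact convex_iInter₂ fun j _ => convex_iInter fun _ =>
      convex_halfSpace_gt (l j).toLinearMap.isLinear _
  have hTloc : ∀ x ∈ K, ∃ y ∈ K, ∀ᶠ x' in 𝓝[K] x, y ∈ T x' := by
    intro x hx
    obtain ⟨y, hy⟩ := hFne x hx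
    refine ⟨y, hFK x hx hy, nhdsWithin_le_nhds ((Filter.eventually_all_finset t).2 fun j hj => ?_)⟩
    by_cases hxj : x ∈ C j
    · filter_upwards [(l j).continuous.continuousAt.eventually_lt_const
        (hl j (htK j hj) x hxj hx y hy)] with x' hx' _ using hx'
    · filter_upwards [(hCclosed j (htK j hj)).isOpen_compl.mem_nhds hxj] with x' hx' hx''
        using absurd hx'' hx'
  obtain ⟨x, hx, hxT⟩ := exists_mem_self_of_eventually_mem hK hconv hne (fun x _ => hTconv x) hTloc
  obtain ⟨j, hj, hxj⟩ := mem_iUnion₂.1 (hcover hx)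
  exact (hxT j hj hxj).false

end FixedPoint

section Correspondences

open Set Filter Topology

variable {A B : Type*} [TopologicalSpace A] [TopologicalSpace B] {F : A → Set B} {K : Set A}

/-- The correspondence `F` has closed graph over `K`, that is, its graph is relatively closed in
`K × B`; stated as: near a point of `K × B` off the graph there are no points of the graph. -/
def HasClosedGraphOn (F : A → Set B) (K : Set A) : Prop :=
  ∀ a ∈ K, ∀ b ∉ F a, ∀ᶠ p in 𝓝[K] a ×ˢ 𝓝 b, p.2 ∉ F p.1

theorem HasClosedGraphOn.isClosed (hF : HasClosedGraphOn F K) {a : A} (ha : a ∈ K) :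
    IsClosed (F a) := by
  refine isOpen_compl_iff.1 (isOpen_iff_eventually.2 fun b hb => ?_)
  exact ((hF a ha b hb).curry).self_of_nhdsWithin ha

theorem HasClosedGraphOn.upperHemicontinuousOn (hF : HasClosedGraphOn F K) {C : Set B}
    (hC : IsCompact C) (hFC : ∀ a ∈ K, F a ⊆ C) : UpperHemicontinuousOn F K := by
  refine .of_forall_isOpen fun a ha G hG haG => ?_
  have hoff : ∀ᶠ p in 𝓝[K] a ×ˢ 𝓟 (C \ G), p.2 ∉ F p.1 :=
    Filter.prod_mono_right _ principal_le_nhdsSet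
      ((hC.diff hG).mem_prod_nhdsSet_of_forall fun b hb => hF a ha b fun h => hb.2 (haG h))
  rw [eventually_prod_principal_iff] at hoff
  filter_upwards [hoff, self_mem_nhdsWithin] with a' ha' hK b hb
  by_contra hbG
  exact ha' b ⟨hFC a' hK hb, hbG⟩ hb

theorem hasClosedGraphOn_of_upperHemicontinuousOn [RegularSpace B]
    (hF : UpperHemicontinuousOn F K) (hclosed : ∀ a ∈ K, IsClosed (F a)) :
    HasClosedGraphOn F K := by
  intro a ha b hb
  obtain ⟨N, hN, hNclosed, hNF⟩ :=
    exists_mem_nhds_isClosed_subset ((hclosed a ha).compl_mem_nhds hb)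
  have hFN : ∀ᶠ a' in 𝓝[K] a, F a' ⊆ Nᶜ :=
    hF.forall_isOpen a ha _ hNclosed.isOpen_compl (subset_compl_comm.1 hNF)
  filter_upwards [hFN.prod_mk hN] with p hp hpF using hp.1 hpF hp.2

theorem HasClosedGraphOn.pi {ι : Type*} {B : ι → Type*} [∀ i, TopologicalSpace (B i)]
    {F : ∀ i, A → Set (B i)} (hF : ∀ i, HasClosedGraphOn (F i) K) :
    HasClosedGraphOn (fun a => univ.pi fun i => F i a) K := by
  intro a ha b hb
  simp only [mem_univ_pi, not_forall] at hb ⊢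
  obtain ⟨i, hi⟩ := hb
  have hproj : Tendsto (Prod.map id fun y : ∀ i, B i => y i) (𝓝[K] a ×ˢ 𝓝 b)
      (𝓝[K] a ×ˢ 𝓝 (b i)) :=
    tendsto_id.prodMap (continuous_apply i).continuousAt
  filter_upwards [hproj.eventually (hF i a ha (b i) hi)] with p hp using ⟨i, hp⟩

theorem eventually_exists_mem_of_lowerHemicontinuousOn (hF : LowerHemicontinuousOn F K)
    {C : Set B} (hFC : ∀ a ∈ K, F a ⊆ C) {p : A → B → Prop} {a : A} (ha : a ∈ K) {b : B}
    (hb : b ∈ F a) (hp : ∀ᶠ x in 𝓝[K] a ×ˢ 𝓝[C] b, p x.1 x.2) :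
    ∀ᶠ a' in 𝓝[K] a, ∃ b' ∈ F a', p a' b' := by
  obtain ⟨P, hP, Q, hQ, hPQ⟩ := eventually_prod_iff.1 hp
  obtain ⟨G, hG, hbG, hGQ⟩ := mem_nhdsWithin.1 hQ
  have hmeet : ∀ᶠ a' in 𝓝[K] a, (F a' ∩ G).Nonempty :=
    lowerHemicontinuousWithinAt_iff.1 (hF a ha) G hG ⟨b, hb, hbG⟩
  filter_upwards [hP, hmeet, self_mem_nhdsWithin] with a' ha' ⟨b', hb', hbG'⟩ hK
  exact ⟨b', hb', hPQ ha' (hGQ ⟨hbG', hFC a' hK hb'⟩)⟩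

theorem HasClosedGraphOn.isMaxOn {γ : Type*} [LinearOrder γ] [DenselyOrdered γ]
    [TopologicalSpace γ] [OrderClosedTopology γ] {C : Set B} {f : A → B → γ}
    (hF : HasClosedGraphOn F K) (hlower : LowerHemicontinuousOn F K) (hFC : ∀ a ∈ K, F a ⊆ C)
    (hf : ContinuousOn (Function.uncurry f) (K ×ˢ C)) :
    HasClosedGraphOn (fun a => {b ∈ F a | IsMaxOn (f a) (F a) b}) K := by
  intro a ha b hb
  by_cases hbF : b ∈ F a
  swap
  · exact (hF a ha b hbF).mono fun p hp h => hp h.1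
  obtain ⟨z, hz, hbz⟩ : ∃ z ∈ F a, f a b < f a z := by
    simpa [isMaxOn_iff, hbF] using hb
  obtain ⟨q, hbq, hqz⟩ := exists_between hbz
  have hgt : ∀ᶠ p in 𝓝[K] a ×ˢ 𝓝[C] z, q < f p.1 p.2 := by
    rw [← nhdsWithin_prod_eq]
    exact (hf (a, z) ⟨ha, hFC a ha hz⟩).eventually_const_lt hqz
  have hbetter : ∀ᶠ a' in 𝓝[K] a, ∃ z' ∈ F a', q < f a' z' :=
    eventually_exists_mem_of_lowerHemicontinuousOn hlower hFC ha hz hgt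
  have hlt : ∀ᶠ p in 𝓝[K] a ×ˢ 𝓝[C] b, f p.1 p.2 < q := by
    rw [← nhdsWithin_prod_eq]
    exact (hf (a, b) ⟨ha, hFC a ha hbF⟩).eventually_lt_const hbq
  obtain ⟨P, hP, Q, hQ, hPQ⟩ := eventually_prod_iff.1 hlt
  have hK : ∀ᶠ a' in 𝓝[K] a, a' ∈ K := self_mem_nhdsWithin
  filter_upwards [((hP.and hbetter).and hK).prod_mk (eventually_nhdsWithin_iff.1 hQ)]
    with p ⟨⟨⟨hp, z', hz', hqz'⟩, hpK⟩, hpQ⟩ hpmax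
  exact ((hpmax.2 hz').trans_lt (hPQ hp (hpQ (hFC _ hpK hpmax.1)))).not_gt hqz'

theorem eventually_nhdsWithin_of_exists_isOpen {p : A → Prop}
    (h : ∃ U, IsOpen U ∧ {a | a ∈ K ∧ p a} = U ∩ K) {a : A} (ha : a ∈ K) (hpa : p a) :
    ∀ᶠ a' in 𝓝[K] a, p a' := by
  obtain ⟨U, hU, heq⟩ := h
  filter_upwards [inter_mem_nhdsWithin K (hU.mem_nhds (heq.subset ⟨ha, hpa⟩).1)]
    with a' ha' using (heq.superset ha'.symm).2

end Correspondences

section Equilibrium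

open Set Filter Topology

theorem convex_setOf_isMaxOn {𝕜 E β : Type*} [Semiring 𝕜] [PartialOrder 𝕜] [AddCommMonoid E]
    [SMul 𝕜 E] [Preorder β] {s : Set E} {f : E → β} (hf : QuasiconcaveOn 𝕜 s f) :
    Convex 𝕜 {b ∈ s | IsMaxOn f s b} := by
  rintro x ⟨hx, hxmax⟩ y ⟨hy, hymax⟩ a b ha hb hab
  obtain ⟨hmem, hle⟩ := hf (f x) ⟨hx, le_rfl⟩ ⟨hy, hymax hx⟩ ha hb hab
  exact ⟨hmem, fun z hz => (hxmax hz).trans hle⟩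

variable {ι : Type*} [DecidableEq ι] {E : ι → Type*} [∀ i, AddCommGroup (E i)]
  [∀ i, Module ℝ (E i)] [∀ i, TopologicalSpace (E i)] [∀ i, IsTopologicalAddGroup (E i)]
  [∀ i, ContinuousSMul ℝ (E i)] [∀ i, LocallyConvexSpace ℝ (E i)]

theorem stmt_16_general {X : ∀ i, Set (E i)} (hne : ∀ i, (X i).Nonempty)
    (hcp : ∀ i, IsCompact (X i)) (hcv : ∀ i, Convex ℝ (X i)) {φ : ∀ i, (∀ j, E j) → Set (E i)}
    {V : ι → (∀ j, E j) → ℝ} (hV : ∀ i, ContinuousOn (V i) (univ.pi X))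
    (hφne : ∀ i, ∀ x ∈ univ.pi X, (φ i x).Nonempty)
    (hφclosed : ∀ i, ∀ x ∈ univ.pi X, IsClosed (φ i x))
    (hφX : ∀ i, ∀ x ∈ univ.pi X, φ i x ⊆ X i)
    (hφupper : ∀ i, UpperHemicontinuousOn (φ i) (univ.pi X))
    (hφlower : ∀ i, LowerHemicontinuousOn (φ i) (univ.pi X))
    (hquasi : ∀ i, ∀ x ∈ univ.pi X,
      QuasiconcaveOn ℝ (φ i x) fun z => V i (Function.update x i z)) :
    ∃ x ∈ univ.pi X, (∀ i, x i ∈ φ i x) ∧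
      ∀ i, ∀ z ∈ φ i x, V i (Function.update x i z) ≤ V i x := by
  let payoff (i : ι) (x : ∀ j, E j) (z : E i) : ℝ := V i (Function.update x i z)
  let reply (i : ι) (x : ∀ j, E j) : Set (E i) := {z ∈ φ i x | IsMaxOn (payoff i x) (φ i x) z}
  have hupdate (i : ι) :
      MapsTo (fun p : (∀ j, E j) × E i => Function.update p.1 i p.2) (univ.pi X ×ˢ X i)
        (univ.pi X) :=
    fun p hp => update_mem_pi_iff.2 ⟨fun j hj => hp.1 j hj.1, fun _ => hp.2⟩
  have hpayoff (i : ι) : ContinuousOn (Function.uncurry (payoff i)) (univ.pi X ×ˢ X i) :=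
    (hV i).comp (by fun_prop) (hupdate i)
  have hreplyX (i : ι) : ∀ x ∈ univ.pi X, reply i x ⊆ X i := fun x hx z hz => hφX i x hx hz.1
  have hreplyne (i : ι) : ∀ x ∈ univ.pi X, (reply i x).Nonempty := fun x hx =>
    ((hcp i).of_isClosed_subset (hφclosed i x hx) (hφX i x hx)).exists_isMaxOn (hφne i x hx)
      ((hpayoff i).comp (Continuous.prodMk_right x).continuousOn
        fun z hz => ⟨hx, hφX i x hx hz⟩)
  have hgraph : HasClosedGraphOn (fun x => univ.pi fun i => reply i x) (univ.pi X) :=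
    .pi fun i => (hasClosedGraphOn_of_upperHemicontinuousOn (hφupper i) (hφclosed i)).isMaxOn
      (hφlower i) (hφX i) (hpayoff i)
  have hKakutani : ∃ x ∈ univ.pi X, x ∈ univ.pi fun i => reply i x :=
    exists_mem_self_of_upperHemicontinuousOn (isCompact_univ_pi hcp) (convex_pi fun i _ => hcv i)
      (univ_pi_nonempty_iff.2 hne)
      (hgraph.upperHemicontinuousOn (isCompact_univ_pi hcp) fun x hx =>
        pi_mono fun i _ => hreplyX i x hx)
      (fun x hx => univ_pi_nonempty_iff.2 fun i => hreplyne i x hx)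
      (fun x hx => convex_pi fun i _ => convex_setOf_isMaxOn (hquasi i x hx))
      (fun x => hgraph.isClosed) fun x hx => pi_mono fun i _ => hreplyX i x hx
  obtain ⟨x, hx, hxreply⟩ := hKakutani
  refine ⟨x, hx, fun i => (hxreply i trivial).1, fun i z hz => ?_⟩
  simpa [payoff] using (hxreply i trivial).2 hz

end Equilibrium

section Profiles

theorem combineProfile_othersProfile {n : ℕ} {E : Fin n → Type*} (i : Fin n) (z : E i)
    (x : ∀ j, E j) : combineProfile i z (othersProfile i x) = Function.update x i z := by
  funext j
  by_cases h : j = i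
  · subst h
    simp [combineProfile]
  · simp [combineProfile, othersProfile, h]

theorem continuous_othersProfile {n : ℕ} {E : Fin n → Type*} [∀ j, TopologicalSpace (E j)]
    (i : Fin n) : Continuous (othersProfile (E := E) i) :=
  continuous_pi fun j => continuous_apply j.1

end Profiles

/-- Arrow–Debreu/Ichiishi existence of a Generalized Nash equilibrium for a
constrained game with nonempty compact convex strategy sets in Euclidean spaces, upper and
lower semicontinuous constraint correspondences with nonempty closed convex values,
continuous payoffs, quasi-concave in own strategy on the feasible set. -/
theorem stmt_16 (n : ℕ) (d : Fin n → ℕ)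
    (X : ∀ i, Set (EuclideanSpace ℝ (Fin (d i))))
    (hne : ∀ i, (X i).Nonempty) (hcp : ∀ i, IsCompact (X i)) (hcv : ∀ i, Convex ℝ (X i))
    (φ : ∀ i : Fin n,
      (∀ j : {j : Fin n // j ≠ i}, EuclideanSpace ℝ (Fin (d j.1))) →
        Set (EuclideanSpace ℝ (Fin (d i))))
    (V : ∀ _ : Fin n, (∀ j, EuclideanSpace ℝ (Fin (d j))) → ℝ)
    (hVcont : ∀ i, Continuous (V i))
    (hφval : ∀ i xo, (∀ j, xo j ∈ X j.1) →
      (φ i xo).Nonempty ∧ IsClosed (φ i xo) ∧ Convex ℝ (φ i xo) ∧ φ i xo ⊆ X i)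
    (hφusc : ∀ i (G : Set (EuclideanSpace ℝ (Fin (d i)))), IsOpen G →
      ∃ U, IsOpen U ∧
        {xo | (∀ j, xo j ∈ X j.1) ∧ φ i xo ⊆ G} = U ∩ {xo | ∀ j, xo j ∈ X j.1})
    (hφlsc : ∀ i (G : Set (EuclideanSpace ℝ (Fin (d i)))), IsOpen G →
      ∃ U, IsOpen U ∧
        {xo | (∀ j, xo j ∈ X j.1) ∧ (φ i xo ∩ G).Nonempty}
          = U ∩ {xo | ∀ j, xo j ∈ X j.1})
    (hquasi : ∀ i xo, (∀ j, xo j ∈ X j.1) →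
      QuasiconcaveOn ℝ (φ i xo) (fun xi => V i (combineProfile i xi xo))) :
    ∃ x : ∀ j, EuclideanSpace ℝ (Fin (d j)),
      (∀ i, x i ∈ X i) ∧
      (∀ i, x i ∈ φ i (othersProfile i x)) ∧
      (∀ i, ∀ xi ∈ φ i (othersProfile i x),
        V i (combineProfile i xi (othersProfile i x)) ≤ V i x) := by
  have hothers (i : Fin n) : Set.MapsTo (othersProfile i) (Set.univ.pi X)
      {xo | ∀ j, xo j ∈ X j.1} := fun x hx j => hx j.1 trivial
  have husc (i : Fin n) : UpperHemicontinuousOn (φ i) {xo | ∀ j, xo j ∈ X j.1} :=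
    .of_forall_isOpen fun xo hxo G hG =>
      eventually_nhdsWithin_of_exists_isOpen (hφusc i G hG) hxo
  have hlsc (i : Fin n) : LowerHemicontinuousOn (φ i) {xo | ∀ j, xo j ∈ X j.1} :=
    fun xo hxo => lowerHemicontinuousWithinAt_iff.2 fun G hG =>
      eventually_nhdsWithin_of_exists_isOpen (hφlsc i G hG) hxo
  obtain ⟨x, hx, hfeasible, hmax⟩ := stmt_16_general (φ := fun i x => φ i (othersProfile i x))
    hne hcp hcv (fun i => (hVcont i).continuousOn)
    (fun i x hx => (hφval i _ (hothers i hx)).1) (fun i x hx => (hφval i _ (hothers i hx)).2.1)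
    (fun i x hx => (hφval i _ (hothers i hx)).2.2.2)
    (fun i => (husc i).comp (continuous_othersProfile i).continuousOn (hothers i))
    (fun i => (hlsc i).comp (continuous_othersProfile i).continuousOn (hothers i))
    (fun i x hx => by
      simpa only [combineProfile_othersProfile] using hquasi i _ (hothers i hx))
  refine ⟨x, fun i => hx i trivial, hfeasible, fun i z hz => ?_⟩
  rw [combineProfile_othersProfile]
  exact hmax i z hz
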